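/- Let ψ = Σ_{i=1}^M (f_i + h_i) and Ω = {x̂ ∈ S : ψ(x̂) = min_{x∈S} ψ(x)}, assumed nonempty. If ψ is strictly convex, then the sequence {x_n} generated by Algorithm 2 converges weakly to a point in Ω (namely, the unique minimizer of ψ over S). -/

import Mathlib

open Filter Topology

/-!
Monotonicity of the subdifferentials and nonexpansiveness of the forward steps show that
`r n = ‖x (n + 1) - x n‖ / lam n` satisfies `r (n + 1) ≤ (1 - α (n + 1)) * r n + o(α (n + 1))`;
since `∑ α n = ∞`, this forces `x (n + 1) - x n = o(lam n)`. For `p ∈ S` the subgradient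
inequalities bound `∑ i, (‖z n - y n i‖ ^ 2 + ‖T i (y n i) - y n i‖ ^ 2)` by
`2 * lam n * (ψ p - ψ c + error) + o(lam n)`. Hence these residuals vanish, so every weak cluster
point `c` of `x` lies in `S` (demiclosedness), and dividing by `lam n` gives `ψ c ≤ ψ p`. A
strictly convex `ψ` has only one minimizer on `S`, so there is a single weak cluster point.
-/

section ConvexAnalysis

open Set
open scoped RealInnerProductSpace NNReal

variable {H : Type*} [NormedAddCommGroup H] [InnerProductSpace ℝ H] {f h : H → ℝ}

/-- `g` is a subgradient of `f` at `p`, written `g ∈ ∂f(p)` in convex analysis. -/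
def IsSubgradientAt (f : H → ℝ) (g p : H) : Prop :=
  ∀ v, f p + ⟪g, v - p⟫ ≤ f v

lemma IsSubgradientAt.inner_sub_sub_nonneg {g g' p p' : H} (hg : IsSubgradientAt f g p)
    (hg' : IsSubgradientAt f g' p') : 0 ≤ ⟪g - g', p - p'⟫ := by
  have hp := hg p'
  have hp' := hg' p
  rw [← neg_sub p p', inner_neg_right] at hp
  rw [inner_sub_left]
  linarith

lemma exists_isSubgradientAt_of_continuous [CompleteSpace H] (hf : ConvexOn ℝ univ f)
    (hc : Continuous f) (p : H) : ∃ g, IsSubgradientAt f g p := by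
  have hconv : Convex ℝ {q : H × ℝ | f q.1 < q.2} := by
    simpa only [mem_univ, true_and] using hf.convex_strict_epigraph
  have hopen : IsOpen {q : H × ℝ | f q.1 < q.2} :=
    isOpen_lt (hc.comp continuous_fst) continuous_snd
  obtain ⟨F, hF⟩ := geometric_hahn_banach_open_point (x := (p, f p)) hconv hopen (by simp)
  set c := F (0, 1)
  have hdec (v : H) (t : ℝ) : F (v, t) = F (v, 0) + t * c := by
    rw [← smul_eq_mul, ← map_smul, ← map_add]
    simp
  have hF' {v : H} {t : ℝ} (ht : f v < t) : F (v, 0) + t * c < F (p, 0) + f p * c := by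
    simpa only [hdec _ t, hdec _ (f p)] using hF (v, t) ht
  have hc0 : c < 0 := by linarith [hF' (lt_add_one (f p))]
  have hsupp (v : H) : F (v, 0) + f v * c ≤ F (p, 0) + f p * c := by
    have hlim : Tendsto (fun t : ℝ ↦ F (v, 0) + t * c) (𝓝[>] f v) (𝓝 (F (v, 0) + f v * c)) :=
      Continuous.tendsto' (by fun_prop) _ _ rfl |>.mono_left nhdsWithin_le_nhds
    exact le_of_tendsto hlim (eventually_mem_nhdsWithin.mono fun t ht ↦ (hF' ht).le)
  -- The separating functional is not vertical, so it is the graph of an affine minorant of slope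
  -- `-F (·, 0) / c`.
  refine ⟨(InnerProductSpace.toDual ℝ H).symm ((-c)⁻¹ • F.comp (.inl ℝ H ℝ)), fun v ↦ ?_⟩
  have hslope : (-c)⁻¹ * (F (v, 0) - F (p, 0)) ≤ f v - f p := by
    rw [inv_mul_le_iff₀ (neg_pos.2 hc0)]
    linarith [hsupp v]
  have hsub : F (v - p, 0) = F (v, 0) - F (p, 0) := by
    rw [← map_sub, Prod.mk_sub_mk, sub_zero]
  rw [InnerProductSpace.toDual_symm_apply]
  simp only [_root_.smul_apply, ContinuousLinearMap.comp_apply,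
    ContinuousLinearMap.inl_apply, smul_eq_mul, hsub]
  linarith

lemma hasDerivAt_line_of_hasGradientAt [CompleteSpace H] {g p v : H} {t : ℝ}
    (hg : HasGradientAt h g (p + t • v)) :
    HasDerivAt (fun t : ℝ ↦ h (p + t • v)) ⟪g, v⟫ t := by
  have hline : HasDerivAt (fun t : ℝ ↦ p + t • v) v t := by
    simpa using ((hasDerivAt_id t).smul_const v).const_add p
  exact hg.hasFDerivAt.comp_hasDerivAt t hline

lemma isSubgradientAt_of_hasGradientAt [CompleteSpace H] {g p : H} (hh : ConvexOn ℝ univ h)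
    (hg : HasGradientAt h g p) : IsSubgradientAt h g p := by
  intro v
  have hline : ConvexOn ℝ univ fun t : ℝ ↦ h (p + t • (v - p)) := by
    refine (hh.comp_affineMap (AffineMap.lineMap p v : ℝ →ᵃ[ℝ] H)).congr fun t _ ↦ ?_
    rw [Function.comp_apply, AffineMap.lineMap_apply_module', add_comm]
  have hderiv : HasDerivAt (fun t : ℝ ↦ h (p + t • (v - p))) ⟪g, v - p⟫ 0 :=
    hasDerivAt_line_of_hasGradientAt (by simpa using hg)
  have hslope := hline.le_slope_of_hasDerivAt (mem_univ 0) (mem_univ 1) one_pos hderiv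
  simp only [slope_def_field, one_smul, zero_smul, add_sub_cancel, add_zero, sub_zero,
    div_one] at hslope
  linarith

lemma le_add_inner_add_norm_sq_of_lipschitzWith_gradient [CompleteSpace H] {h' : H → H} {K : ℝ≥0}
    (hg : ∀ p, HasGradientAt h (h' p) p) (hK : LipschitzWith K h') (p v : H) :
    h (p + v) ≤ h p + ⟪h' p, v⟫ + K / 2 * ‖v‖ ^ 2 := by
  let φ : ℝ → ℝ := fun t ↦ h (p + t • v) - t * ⟪h' p, v⟫ - K / 2 * ‖v‖ ^ 2 * t ^ 2
  have hφ (t : ℝ) : HasDerivAt φ (⟪h' (p + t • v) - h' p, v⟫ - K * ‖v‖ ^ 2 * t) t := by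
    refine (((hasDerivAt_line_of_hasGradientAt (hg _)).sub
      ((hasDerivAt_id t).mul_const ⟪h' p, v⟫)).sub
        (((hasDerivAt_id t).pow 2).const_mul (K / 2 * ‖v‖ ^ 2))).congr_deriv ?_
    simp only [inner_sub_left, id_eq, Nat.cast_ofNat]
    ring
  have hφ_nonpos {t : ℝ} (ht : 0 < t) : ⟪h' (p + t • v) - h' p, v⟫ - K * ‖v‖ ^ 2 * t ≤ 0 := by
    have hnorm : ‖h' (p + t • v) - h' p‖ ≤ K * (t * ‖v‖) := by
      simpa [norm_smul, abs_of_pos ht] using hK.norm_sub_le (p + t • v) p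
    have := real_inner_le_norm (h' (p + t • v) - h' p) v
    nlinarith [norm_nonneg v]
  have hanti : AntitoneOn φ (Icc 0 1) := by
    refine antitoneOn_of_deriv_nonpos (convex_Icc 0 1)
      (fun t _ ↦ (hφ t).continuousAt.continuousWithinAt)
      (fun t _ ↦ (hφ t).differentiableAt.differentiableWithinAt) fun t ht ↦ ?_
    rw [interior_Icc] at ht
    exact (hφ t).deriv.trans_le (hφ_nonpos ht.1)
  have hle : φ 1 ≤ φ 0 :=
    hanti (left_mem_Icc.2 zero_le_one) (right_mem_Icc.2 zero_le_one) zero_le_one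
  simp only [φ, one_smul, zero_smul, add_zero] at hle
  linarith

lemma add_inner_add_mul_norm_gradient_sub_sq_le [CompleteSpace H] {h' : H → H} {K : ℝ≥0}
    (hh : ConvexOn ℝ univ h) (hg : ∀ p, HasGradientAt h (h' p) p) (hK : LipschitzWith K h')
    (p q : H) (t : ℝ) :
    h p + ⟪h' p, q - p⟫ + (t - K / 2 * t ^ 2) * ‖h' q - h' p‖ ^ 2 ≤ h q := by
  -- Compare the linear minorant at `p` with the quadratic majorant at `q` in the point
  -- `q - t (h' q - h' p)`.
  set δ := h' q - h' p with hδ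
  have hlower := isSubgradientAt_of_hasGradientAt hh (hg p) (q + (-t) • δ)
  have hupper := le_add_inner_add_norm_sq_of_lipschitzWith_gradient hg hK q ((-t) • δ)
  have hinner : ⟪h' q, δ⟫ - ⟪h' p, δ⟫ = ‖δ‖ ^ 2 := by
    rw [← inner_sub_left, ← hδ, real_inner_self_eq_norm_sq]
  rw [add_sub_right_comm, inner_add_right, inner_smul_right] at hlower
  rw [inner_smul_right, norm_smul, mul_pow, Real.norm_eq_abs, sq_abs] at hupper
  linear_combination hlower + hupper - t * hinner

lemma norm_forward_step_sub_le [CompleteSpace H] {h' : H → H} {K : ℝ≥0} {lam : ℝ}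
    (hh : ConvexOn ℝ univ h) (hg : ∀ p, HasGradientAt h (h' p) p) (hK : LipschitzWith K h')
    (hlam : 0 ≤ lam) (hlamK : lam * K ≤ 2) (p q : H) :
    ‖(p - q) - lam • (h' p - h' q)‖ ≤ ‖p - q‖ := by
  have hpq := add_inner_add_mul_norm_gradient_sub_sq_le hh hg hK p q (lam / 2)
  have hqp := add_inner_add_mul_norm_gradient_sub_sq_le hh hg hK q p (lam / 2)
  rw [norm_sub_rev] at hpq
  have hinner : ⟪h' p, q - p⟫ + ⟪h' q, p - q⟫ = -⟪p - q, h' p - h' q⟫ := by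
    simp only [inner_sub_left, inner_sub_right, real_inner_comm]
    ring
  have hcoco : lam / 2 * ‖h' p - h' q‖ ^ 2 ≤ ⟪p - q, h' p - h' q⟫ := by
    have hcoef : lam / 2 ≤ 2 * (lam / 2 - K / 2 * (lam / 2) ^ 2) := by nlinarith
    have := mul_le_mul_of_nonneg_right hcoef (sq_nonneg ‖h' p - h' q‖)
    linarith
  refine le_of_sq_le_sq ?_ (norm_nonneg _)
  rw [norm_sub_sq_real, inner_smul_right, norm_smul, mul_pow, Real.norm_eq_abs, sq_abs]
  nlinarith

/-- `y = prox_{lam f}(a)`, expressed by the minimization property of `y`. -/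
def IsProx (f : H → ℝ) (lam : ℝ) (a y : H) : Prop :=
  ∀ v, f y + 1 / (2 * lam) * ‖a - y‖ ^ 2 ≤ f v + 1 / (2 * lam) * ‖a - v‖ ^ 2

lemma IsProx.isSubgradientAt {lam : ℝ} {a y : H} (hy : IsProx f lam a y)
    (hf : ConvexOn ℝ univ f) : IsSubgradientAt f (lam⁻¹ • (a - y)) y := by
  intro v
  have hsegment {t : ℝ} (ht : 0 < t) (ht1 : t ≤ 1) :
      f y + ⟪lam⁻¹ • (a - y), v - y⟫ - t * (1 / (2 * lam) * ‖v - y‖ ^ 2) ≤ f v := by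
    have hmin := hy (y + t • (v - y))
    have hconv := hf.2 (mem_univ y) (mem_univ v) (sub_nonneg.2 ht1) ht.le (sub_add_cancel 1 t)
    rw [show (1 - t) • y + t • v = y + t • (v - y) by module, smul_eq_mul, smul_eq_mul] at hconv
    rw [← sub_sub, norm_sub_sq_real (a - y), inner_smul_right, norm_smul, mul_pow,
      Real.norm_eq_abs, sq_abs] at hmin
    rw [real_inner_smul_left]
    refine le_of_mul_le_mul_left ?_ ht
    linear_combination hmin + hconv
  have hlim : Tendsto (fun t : ℝ ↦ f y + ⟪lam⁻¹ • (a - y), v - y⟫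
      - t * (1 / (2 * lam) * ‖v - y‖ ^ 2)) (𝓝[>] 0) (𝓝 (f y + ⟪lam⁻¹ • (a - y), v - y⟫)) :=
    Continuous.tendsto' (by fun_prop) _ _ (by simp) |>.mono_left nhdsWithin_le_nhds
  refine le_of_tendsto hlim ?_
  filter_upwards [Ioc_mem_nhdsGT (zero_lt_one (α := ℝ))] with t ht using hsegment ht.1 ht.2

lemma mul_norm_le_norm_of_inner_sub_smul_nonneg {c : ℝ} {r v : H} (hrv : 0 ≤ ⟪r - c • v, v⟫) :
    c * ‖v‖ ≤ ‖r‖ := by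
  rcases (norm_nonneg v).eq_or_lt with hv | hv
  · simp [← hv]
  · rw [inner_sub_left, real_inner_smul_left, real_inner_self_eq_norm_sq] at hrv
    have := real_inner_le_norm r v
    exact le_of_mul_le_mul_right (by linarith) hv

lemma inv_mul_norm_prox_gradient_sub_le {l l' : ℝ} {y y' z z' g g' e e' : H} (hl : 0 < l)
    (hy : IsSubgradientAt f (l⁻¹ • (z - y) - g + e) y)
    (hy' : IsSubgradientAt f (l'⁻¹ • (z' - y') - g' + e') y')
    (hg : ‖(z - z') - l • (g - g')‖ ≤ ‖z - z'‖) :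
    l⁻¹ * ‖y - y'‖ ≤ l⁻¹ * ‖z - z'‖ + |l⁻¹ - l'⁻¹| * ‖z' - y'‖ + ‖e - e'‖ := by
  have hmono := hy.inner_sub_sub_nonneg hy'
  rw [show l⁻¹ • (z - y) - g + e - (l'⁻¹ • (z' - y') - g' + e')
      = l⁻¹ • ((z - z') - l • (g - g')) + (l⁻¹ - l'⁻¹) • (z' - y') + (e - e') - l⁻¹ • (y - y') by
    rw [smul_sub l⁻¹ (z - z'), inv_smul_smul₀ hl.ne']
    module] at hmono
  calc l⁻¹ * ‖y - y'‖
      ≤ ‖l⁻¹ • ((z - z') - l • (g - g')) + (l⁻¹ - l'⁻¹) • (z' - y') + (e - e')‖ :=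
        mul_norm_le_norm_of_inner_sub_smul_nonneg hmono
    _ ≤ ‖l⁻¹ • ((z - z') - l • (g - g'))‖ + ‖(l⁻¹ - l'⁻¹) • (z' - y')‖ + ‖e - e'‖ :=
        norm_add₃_le
    _ ≤ l⁻¹ * ‖z - z'‖ + |l⁻¹ - l'⁻¹| * ‖z' - y'‖ + ‖e - e'‖ := by
        rw [norm_smul, norm_smul, Real.norm_of_nonneg (inv_nonneg.2 hl.le), Real.norm_eq_abs]
        gcongr

lemma norm_sub_sq_le_of_prox_gradient_step {l : ℝ} {y z g e : H} (hl : 0 < l)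
    (hy : IsSubgradientAt f (l⁻¹ • (z - y) - g + e) y) (hg : IsSubgradientAt h g z) (p : H) :
    ‖z - y‖ ^ 2 ≤ ‖z - p‖ ^ 2 - ‖y - p‖ ^ 2
      + 2 * l * (f p + h p - (f y + h z) + ⟪g, z - y⟫ + ⟪e, y - p⟫) := by
  have hfp := mul_le_mul_of_nonneg_left (hy p) hl.le
  have hhp := mul_le_mul_of_nonneg_left (hg p) hl.le
  have hexpand : ‖z - p‖ ^ 2 = ‖z - y‖ ^ 2 - 2 * ⟪z - y, p - y⟫ + ‖y - p‖ ^ 2 := by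
    rw [← sub_sub_sub_cancel_right z p y, norm_sub_sq_real, norm_sub_rev p y]
  have hgzy : ⟪g, z - y⟫ = ⟪g, p - y⟫ - ⟪g, p - z⟫ := by
    rw [← inner_sub_right, sub_sub_sub_cancel_left]
  have heyp : ⟪e, y - p⟫ = -⟪e, p - y⟫ := by rw [← inner_neg_right, neg_sub]
  have hcancel : l * (l⁻¹ * ⟪z - y, p - y⟫) = ⟪z - y, p - y⟫ := mul_inv_cancel_left₀ hl.ne' _
  rw [inner_add_left, inner_sub_left, real_inner_smul_left] at hfp
  rw [hexpand, hgzy, heyp]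
  linear_combination 2 * hfp + 2 * hhp - 2 * hcancel

lemma inner_add_sub_eq_norm_sq_sub_norm_sq (a b : H) : ⟪a + b, a - b⟫ = ‖a‖ ^ 2 - ‖b‖ ^ 2 := by
  rw [inner_add_left, inner_sub_right, inner_sub_right, real_inner_self_eq_norm_sq,
    real_inner_self_eq_norm_sq, real_inner_comm]
  ring

lemma convexOn_map_average_le {ι E : Type*} [Fintype ι] [Nonempty ι] [AddCommGroup E] [Module ℝ E]
    {φ : E → ℝ} (hφ : ConvexOn ℝ univ φ) (v : ι → E) :
    φ ((Fintype.card ι : ℝ)⁻¹ • ∑ i, v i) ≤ (Fintype.card ι : ℝ)⁻¹ * ∑ i, φ (v i) := by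
  rw [Finset.smul_sum, Finset.mul_sum]
  exact hφ.map_sum_le (fun _ _ ↦ by positivity) (by simp) fun _ _ ↦ mem_univ _

lemma convexOn_norm_sub_sq {E : Type*} [NormedAddCommGroup E] [NormedSpace ℝ E] (p : E) :
    ConvexOn ℝ univ fun v ↦ ‖v - p‖ ^ 2 := by
  simpa only [dist_eq_norm, Pi.pow_def] using
    (convexOn_univ_dist p).pow (fun _ _ ↦ dist_nonneg) 2

end ConvexAnalysis

section WeakConvergence

open Asymptotics
open scoped RealInnerProductSpace

variable {ι H : Type*} [NormedAddCommGroup H] [InnerProductSpace ℝ H] {l : Filter ι} {x y : ι → H}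
  {p : H}

/-- Weak convergence in a Hilbert space, tested directly against vectors rather than through the
topology of `WeakSpace ℝ H`. -/
def WeakTendsto (x : ι → H) (l : Filter ι) (p : H) : Prop :=
  ∀ q, Tendsto (fun n ↦ ⟪x n, q⟫) l (𝓝 ⟪p, q⟫)

lemma isBigO_inner_mul_norm (x y : ι → H) :
    (fun n ↦ ⟪x n, y n⟫) =O[l] fun n ↦ ‖x n‖ * ‖y n‖ :=
  .of_bound' (.of_forall fun _ ↦ (norm_inner_le_norm _ _).trans (le_abs_self _))

lemma isBigO_inner {k : ι → ℝ} (hx : x =O[l] fun _ ↦ (1 : ℝ)) (hy : y =O[l] k) :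
    (fun n ↦ ⟪x n, y n⟫) =O[l] k := by
  simpa using (isBigO_inner_mul_norm x y).trans (hx.norm_left.mul hy.norm_left)

lemma isLittleO_inner {k : ι → ℝ} (hx : x =O[l] fun _ ↦ (1 : ℝ)) (hy : y =o[l] k) :
    (fun n ↦ ⟪x n, y n⟫) =o[l] k := by
  simpa using (isBigO_inner_mul_norm x y).trans_isLittleO (hx.norm_left.mul_isLittleO hy.norm_left)

lemma WeakTendsto.congr_of_tendsto_sub (hx : WeakTendsto x l p)
    (hyx : Tendsto (fun n ↦ y n - x n) l (𝓝 0)) : WeakTendsto y l p := by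
  intro q
  have hdiff : Tendsto (fun n ↦ ⟪y n - x n, q⟫) l (𝓝 0) := by
    simpa using hyx.inner (tendsto_const_nhds (x := q))
  refine (zero_add ⟪p, q⟫ ▸ hdiff.add (hx q)).congr fun n ↦ ?_
  rw [← inner_add_left, sub_add_cancel]

lemma WeakTendsto.tendsto_inner_sub (hx : WeakTendsto x l p) (q : H) :
    Tendsto (fun n ↦ ⟪q, x n - p⟫) l (𝓝 0) := by
  simpa only [inner_sub_right, real_inner_comm, sub_self] using (hx q).sub_const ⟪p, q⟫

-- Banach–Alaoglu in the dual, transported by the Riesz isomorphism.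
lemma exists_weakTendsto_ultrafilter [CompleteSpace H] {U : Ultrafilter ι}
    (hx : x =O[U] fun _ ↦ (1 : ℝ)) : ∃ p, WeakTendsto x U p := by
  obtain ⟨C, hC⟩ := hx.bound
  let F : ι → WeakDual ℝ H := fun n ↦ StrongDual.toWeakDual (InnerProductSpace.toDual ℝ H (x n))
  have hball : WeakDual.toStrongDual ⁻¹' Metric.closedBall (0 : StrongDual ℝ H) C ∈ U.map F := by
    refine Ultrafilter.mem_map.2 (hC.mono fun n hn ↦ ?_)
    simpa [F] using hn
  obtain ⟨φ, -, hφ⟩ :=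
    (WeakDual.isCompact_closedBall (𝕜 := ℝ) (E := H) 0 C).ultrafilter_le_nhds (U.map F)
      (le_principal_iff.2 hball)
  refine ⟨(InnerProductSpace.toDual ℝ H).symm (WeakDual.toStrongDual φ), fun q ↦ ?_⟩
  rw [InnerProductSpace.toDual_symm_apply]
  exact ((WeakDual.eval_continuous q).tendsto φ).comp hφ

end WeakConvergence

section FirmlyNonexpansiveMaps

open Asymptotics
open scoped RealInnerProductSpace

variable {H : Type*} [NormedAddCommGroup H] [InnerProductSpace ℝ H] {T : H → H}

/-- Firmly nonexpansive maps of a Hilbert space; metric projections and resolvents of monotone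
operators are the typical examples. -/
def FirmlyNonexpansive (T : H → H) : Prop :=
  ∀ x y, ‖T x - T y‖ ^ 2 ≤ ⟪T x - T y, x - y⟫

namespace FirmlyNonexpansive

lemma inner_sub_sub_nonneg (hT : FirmlyNonexpansive T) (x y : H) :
    0 ≤ ⟪T x - T y, (x - T x) - (y - T y)⟫ := by
  have := hT x y
  rw [sub_sub_sub_comm, inner_sub_right, real_inner_self_eq_norm_sq]
  linarith

lemma lipschitzWith_one (hT : FirmlyNonexpansive T) : LipschitzWith 1 T := by
  refine LipschitzWith.mk_one fun x y ↦ ?_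
  rw [dist_eq_norm, dist_eq_norm]
  have := (hT x y).trans (real_inner_le_norm _ _)
  by_contra! hlt
  nlinarith [norm_nonneg (x - y)]

lemma isFixedPt_iff (hT : FirmlyNonexpansive T) {p : H} :
    Function.IsFixedPt T p ↔ ∀ v, 0 ≤ ⟪T v - p, v - T v⟫ := by
  refine ⟨fun hp v ↦ ?_, fun hp ↦ ?_⟩
  · simpa [hp.eq] using hT.inner_sub_sub_nonneg v p
  · have := hp p
    rw [← neg_sub (T p) p, inner_neg_right, real_inner_self_eq_norm_sq] at this
    have hzero : ‖T p - p‖ ^ 2 = 0 := le_antisymm (by linarith) (sq_nonneg _)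
    exact sub_eq_zero.1 (norm_eq_zero.1 (pow_eq_zero_iff two_ne_zero |>.1 hzero))

lemma convex_fixedPoints (hT : FirmlyNonexpansive T) : Convex ℝ (Function.fixedPoints T) := by
  intro p hp q hq a b ha hb hab
  refine hT.isFixedPt_iff.2 fun v ↦ ?_
  have hsplit : T v - (a • p + b • q) = a • (T v - p) + b • (T v - q) := by
    rw [smul_sub, smul_sub, sub_add_sub_comm, ← add_smul, hab, one_smul]
  rw [hsplit, inner_add_left, real_inner_smul_left, real_inner_smul_left]
  exact add_nonneg (mul_nonneg ha (hT.isFixedPt_iff.1 hp v))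
    (mul_nonneg hb (hT.isFixedPt_iff.1 hq v))

lemma norm_sub_sq_le (hT : FirmlyNonexpansive T) {p : H} (hp : Function.IsFixedPt T p) (v : H) :
    ‖T v - v‖ ^ 2 ≤ ‖v - p‖ ^ 2 - ‖T v - p‖ ^ 2 := by
  have hfix := hT.isFixedPt_iff.1 hp v
  rw [← sub_add_sub_cancel v (T v) p, norm_add_sq_real, real_inner_comm, norm_sub_rev (T v) v]
  linarith

lemma isFixedPt_of_weakTendsto {ι : Type*} {l : Filter ι} [l.NeBot] {y : ι → H} {c : H}
    (hT : FirmlyNonexpansive T) (hy : WeakTendsto y l c) (hyO : y =O[l] fun _ ↦ (1 : ℝ))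
    (hres : Tendsto (fun n ↦ T (y n) - y n) l (𝓝 0)) : Function.IsFixedPt T c := by
  refine hT.isFixedPt_iff.2 fun v ↦ ?_
  have hres' : (fun n ↦ y n - T (y n)) =o[l] fun _ ↦ (1 : ℝ) := by
    simpa only [neg_sub] using ((isLittleO_one_iff ℝ).2 hres).neg_left
  have hTy : (fun n ↦ T (y n) - T v) =O[l] fun _ ↦ (1 : ℝ) := by
    simpa only [sub_sub_cancel] using
      (hyO.sub hres'.isBigO).sub (isBigO_const_const (T v) one_ne_zero l)
  have hstrong := (isLittleO_one_iff ℝ).1 (isLittleO_inner hTy hres')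
  have hweak : Tendsto (fun n ↦ ⟪T (y n) - T v, v - T v⟫) l (𝓝 ⟪c - T v, v - T v⟫) := by
    simpa only [inner_sub_left _ _ (v - T v)] using
      (hy.congr_of_tendsto_sub hres (v - T v)).sub_const _
  have hlim := hstrong.sub hweak
  rw [zero_sub, ← inner_neg_left, neg_sub] at hlim
  refine ge_of_tendsto' hlim fun n ↦ ?_
  rw [← inner_sub_right]
  exact hT.inner_sub_sub_nonneg (y n) v

end FirmlyNonexpansive

end FirmlyNonexpansiveMaps

section AsymptoticRecursions

open Asymptotics Finset

variable {E F : Type*} [NormedAddCommGroup E] [NormedAddCommGroup F]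

lemma tendsto_zero_of_norm_sq_le {ι : Type*} {l : Filter ι} {v : ι → E} {r : ι → ℝ}
    (hvr : ∀ n, ‖v n‖ ^ 2 ≤ r n) (hr : Tendsto r l (𝓝 0)) : Tendsto v l (𝓝 0) :=
  squeeze_zero_norm (fun n ↦ Real.le_sqrt_of_sq_le (hvr n)) (by simpa using hr.sqrt)

lemma isBigO_one_succ_iff {x : ℕ → E} :
    ((fun n ↦ x (n + 1)) =O[atTop] fun _ ↦ (1 : ℝ)) ↔ x =O[atTop] fun _ ↦ (1 : ℝ) := by
  conv_rhs => rw [← map_add_atTop_eq_nat 1, isBigO_map]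
  rfl

lemma isBigO_one_comp_of_lipschitzWith {ι : Type*} {l : Filter ι} {K : NNReal} {T : E → F}
    {x : ι → E} (hT : LipschitzWith K T) (hx : x =O[l] fun _ ↦ (1 : ℝ)) :
    (fun n ↦ T (x n)) =O[l] fun _ ↦ (1 : ℝ) := by
  have hdiff : (fun n ↦ T (x n) - T 0) =O[l] x :=
    .of_bound K (.of_forall fun n ↦ by simpa using hT.norm_sub_le (x n) 0)
  simpa only [sub_add_cancel] using
    (hdiff.trans hx).add (isBigO_const_const (T 0) one_ne_zero l)

lemma isBigO_one_of_eq_add_smul [NormedSpace ℝ E] {b d : ℕ → E} {β : ℕ → ℝ}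
    (hβ : Tendsto β atTop (𝓝 0)) (hb : b =O[atTop] fun _ ↦ (1 : ℝ))
    (hd : ∀ᶠ n in atTop, d (n + 1) = b n + β n • d n) : d =O[atTop] fun _ ↦ (1 : ℝ) := by
  obtain ⟨C, hC⟩ := hb.bound
  have hβ' : ∀ᶠ n in atTop, ‖β n‖ ≤ 1 / 2 :=
    (norm_zero (E := ℝ) ▸ hβ.norm).eventually_le_const one_half_pos
  obtain ⟨N, hN⟩ := eventually_atTop.1 ((hC.and hβ').and hd)
  refine .of_bound (max ‖d N‖ (2 * C)) (eventually_atTop.2 ⟨N, fun n hn ↦ ?_⟩)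
  rw [norm_one, mul_one]
  induction n, hn using Nat.le_induction with
  | base => exact le_max_left _ _
  | succ n hn ih =>
    obtain ⟨⟨hbn, hβn⟩, hdn⟩ := hN n hn
    rw [norm_one, mul_one] at hbn
    calc ‖d (n + 1)‖
        ≤ ‖b n‖ + ‖β n‖ * ‖d n‖ := by rw [hdn, ← norm_smul]; exact norm_add_le _ _
      _ ≤ C + 1 / 2 * max ‖d N‖ (2 * C) := by gcongr
      _ ≤ max ‖d N‖ (2 * C) := by linarith [le_max_right ‖d N‖ (2 * C)]

lemma tendsto_prod_Ico_one_sub_of_not_summable {a : ℕ → ℝ} {N : ℕ} (ha : ∀ n, 0 ≤ a n)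
    (ha' : ∀ n ≥ N, a n ≤ 1) (hsum : ¬ Summable a) :
    Tendsto (fun n ↦ ∏ i ∈ Ico N n, (1 - a i)) atTop (𝓝 0) := by
  have hdiv : Tendsto (fun n ↦ ∑ i ∈ Ico N n, a i) atTop atTop := by
    refine (tendsto_atTop_add_const_right _ (-∑ i ∈ range N, a i)
      ((not_summable_iff_tendsto_nat_atTop_of_nonneg ha).1 hsum)).congr' ?_
    filter_upwards [eventually_ge_atTop N] with n hn
    rw [sum_Ico_eq_sub _ hn, sub_eq_add_neg]
  have hnonneg {n i : ℕ} (hi : i ∈ Ico N n) : 0 ≤ 1 - a i :=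
    sub_nonneg.2 (ha' i (mem_Ico.1 hi).1)
  refine squeeze_zero (fun n ↦ prod_nonneg fun i ↦ hnonneg) (fun n ↦ ?_)
    (Real.tendsto_exp_neg_atTop_nhds_zero.comp hdiv)
  rw [Function.comp_apply, ← sum_neg_distrib, Real.exp_sum]
  exact prod_le_prod (fun i ↦ hnonneg) fun i _ ↦ Real.one_sub_le_exp_neg (a i)

lemma tendsto_zero_of_le_one_sub_mul_add {r a e : ℕ → ℝ} (hr : ∀ n, 0 ≤ r n) (ha : ∀ n, 0 ≤ a n)
    (ha' : ∀ᶠ n in atTop, a n ≤ 1) (hsum : ¬ Summable a) (he : e =o[atTop] a)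
    (hrec : ∀ᶠ n in atTop, r (n + 1) ≤ (1 - a n) * r n + e n) : Tendsto r atTop (𝓝 0) := by
  refine (tendsto_order.2 ⟨fun ε hε ↦ .of_forall fun n ↦ hε.trans_le (hr n), fun ε hε ↦ ?_⟩)
  have he' : ∀ᶠ n in atTop, e n ≤ ε / 2 * a n := by
    filter_upwards [he.bound (half_pos hε)] with n hn
    exact (le_abs_self _).trans (by simpa [abs_of_nonneg (ha n)] using hn)
  obtain ⟨N, hN⟩ := eventually_atTop.1 ((ha'.and hrec).and he')
  -- The excess `r n - ε / 2` contracts by the factor `1 - a n`.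
  have hexcess : ∀ n ≥ N, r (n + 1) - ε / 2 ≤ (1 - a n) * (r n - ε / 2) + 0 := by
    intro n hn
    linarith [(hN n hn).1.2, (hN n hn).2]
  have hprod := (tendsto_prod_Ico_one_sub_of_not_summable (N := N) ha
    (fun n hn ↦ (hN n hn).1.1) hsum).const_mul (r N - ε / 2)
  rw [mul_zero] at hprod
  filter_upwards [hprod.eventually_lt_const (half_pos hε), eventually_ge_atTop N] with n hn hNn
  have hgronwall := discrete_gronwall_prod_general (u := fun n ↦ r n - ε / 2) hexcess
    (fun n hn ↦ sub_nonneg.2 (hN n hn).1.1) hNn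
  simp only [zero_mul, sum_const_zero, add_zero] at hgronwall
  linarith

end AsymptoticRecursions

/-- The asymptotic conditions on the inertial parameters `θ`, step sizes `lam`, conjugate-gradient
weights `β` and anchoring weights `α`, with the limits of quotients written in Landau notation. -/
structure AdmissibleParameters (θ lam β α : ℕ → ℝ) : Prop where
  lam_pos (n : ℕ) : 0 < lam n
  α_pos (n : ℕ) : 0 < α n
  tendsto_lam : Tendsto lam atTop (𝓝 0)
  not_summable_α : ¬ Summable α
  inv_lam_sub : (fun n ↦ (lam (n + 1))⁻¹ - (lam n)⁻¹) =o[atTop] fun n ↦ α (n + 1)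
  α_sub : (fun n ↦ α n - α (n + 1)) =o[atTop] fun n ↦ α (n + 1) * lam (n + 1)
  α_isLittleO_lam : α =o[atTop] lam
  θ_isLittleO : θ =o[atTop] fun n ↦ α (n + 1) * lam (n + 1)
  β_isLittleO : β =o[atTop] fun n ↦ α (n + 1)

namespace AdmissibleParameters

open Asymptotics

variable {θ lam β α : ℕ → ℝ}

lemma of_tendsto (hlam_pos : ∀ n, 0 < lam n) (hα_pos : ∀ n, 0 < α n)
    (hlam : Tendsto lam atTop (𝓝 0)) (hC1 : ¬ Summable α)
    (hC2 : Tendsto (fun n ↦ 1 / α (n + 1) * |1 / lam (n + 1) - 1 / lam n|) atTop (𝓝 0))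
    (hC3 : Tendsto (fun n ↦ 1 / lam (n + 1) * |1 - α n / α (n + 1)|) atTop (𝓝 0))
    (hC4 : Tendsto (fun n ↦ α n / lam n) atTop (𝓝 0))
    (hC5 : Tendsto (fun n ↦ θ n / (α (n + 1) * lam (n + 1))) atTop (𝓝 0))
    (hC7 : Tendsto (fun n ↦ β n / α (n + 1)) atTop (𝓝 0)) :
    AdmissibleParameters θ lam β α where
  lam_pos := hlam_pos
  α_pos := hα_pos
  tendsto_lam := hlam
  not_summable_α := hC1
  inv_lam_sub := by
    refine isLittleO_norm_left.1 (isLittleO_of_tendsto (fun n h ↦ absurd h (hα_pos _).ne') ?_)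
    simpa only [one_div, inv_mul_eq_div, Real.norm_eq_abs] using hC2
  α_sub := by
    refine isLittleO_norm_left.1 (isLittleO_of_tendsto
      (fun n h ↦ absurd h (mul_pos (hα_pos _) (hlam_pos _)).ne') (hC3.congr fun n ↦ ?_))
    rw [one_sub_div (hα_pos _).ne', abs_div, abs_of_pos (hα_pos _), abs_sub_comm,
      Real.norm_eq_abs]
    field_simp
  α_isLittleO_lam := isLittleO_of_tendsto (fun n h ↦ absurd h (hlam_pos n).ne') hC4
  θ_isLittleO :=
    isLittleO_of_tendsto (fun n h ↦ absurd h (mul_pos (hα_pos _) (hlam_pos _)).ne') hC5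
  β_isLittleO := isLittleO_of_tendsto (fun n h ↦ absurd h (hα_pos _).ne') hC7

variable (hp : AdmissibleParameters θ lam β α)
include hp

lemma lam_isLittleO_one : lam =o[atTop] fun _ ↦ (1 : ℝ) :=
  (isLittleO_one_iff ℝ).2 hp.tendsto_lam

lemma α_isLittleO_one : α =o[atTop] fun _ ↦ (1 : ℝ) :=
  hp.α_isLittleO_lam.trans hp.lam_isLittleO_one

lemma α_succ_isLittleO_one : (fun n ↦ α (n + 1)) =o[atTop] fun _ ↦ (1 : ℝ) :=
  hp.α_isLittleO_one.comp_tendsto (tendsto_add_atTop_nat 1)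

lemma eventually_α_le_one : ∀ᶠ n in atTop, α n ≤ 1 :=
  ((isLittleO_one_iff ℝ).1 hp.α_isLittleO_one).eventually_le_const one_pos

lemma isEquivalent_α_succ : α ~[atTop] fun n ↦ α (n + 1) := by
  refine hp.α_sub.trans_isBigO ?_
  simpa using (isBigO_refl (fun n ↦ α (n + 1)) atTop).mul
    (hp.lam_isLittleO_one.comp_tendsto (tendsto_add_atTop_nat 1)).isBigO

lemma isEquivalent_lam_succ : lam ~[atTop] fun n ↦ lam (n + 1) := by
  have hsub : (fun n ↦ lam (n + 1) * (lam n * ((lam (n + 1))⁻¹ - (lam n)⁻¹)))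
      =o[atTop] fun n ↦ lam (n + 1) := by
    simpa using (isBigO_refl (fun n ↦ lam (n + 1)) atTop).mul_isLittleO
      (hp.lam_isLittleO_one.mul (hp.inv_lam_sub.trans hp.α_succ_isLittleO_one))
  refine hsub.congr_left fun n ↦ ?_
  have := (hp.lam_pos n).ne'
  have := (hp.lam_pos (n + 1)).ne'
  simp only [Pi.sub_apply]
  field_simp

lemma tendsto_β : Tendsto β atTop (𝓝 0) :=
  (isLittleO_one_iff ℝ).1 (hp.β_isLittleO.trans hp.α_succ_isLittleO_one)

lemma β_succ_isLittleO : (fun n ↦ β (n + 1)) =o[atTop] fun n ↦ α (n + 1) :=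
  (hp.β_isLittleO.comp_tendsto (tendsto_add_atTop_nat 1)).trans_isBigO
    (hp.isEquivalent_α_succ.isBigO_symm.comp_tendsto (tendsto_add_atTop_nat 1))

lemma θ_isLittleO_lam : θ =o[atTop] lam := by
  refine hp.θ_isLittleO.trans_isBigO ?_
  simpa using hp.α_succ_isLittleO_one.isBigO.mul hp.isEquivalent_lam_succ.isBigO_symm

lemma θ_succ_isLittleO :
    (fun n ↦ θ (n + 1)) =o[atTop] fun n ↦ α (n + 1) * lam (n + 1) :=
  (hp.θ_isLittleO.comp_tendsto (tendsto_add_atTop_nat 1)).trans_isBigO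
    ((hp.isEquivalent_α_succ.isBigO_symm.mul hp.isEquivalent_lam_succ.isBigO_symm).comp_tendsto
      (tendsto_add_atTop_nat 1))

end AdmissibleParameters

section InertialSplittingMethod

open Asymptotics
open scoped RealInnerProductSpace

/-- The data of the problem of minimizing `∑ i, (f i + h i)` over the common fixed points of the
maps `T i`; the field `h' i` is the gradient of the smooth part `h i`. -/
structure CompositeFixedPointProblem (ι H : Type*) [NormedAddCommGroup H] [InnerProductSpace ℝ H]
    [CompleteSpace H] where
  f : ι → H → ℝ
  h : ι → H → ℝ
  h' : ι → H → H
  T : ι → H → H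
  continuous_f (i : ι) : Continuous (f i)
  convexOn_f (i : ι) : ConvexOn ℝ Set.univ (f i)
  convexOn_h (i : ι) : ConvexOn ℝ Set.univ (h i)
  hasGradientAt_h (i : ι) (v : H) : HasGradientAt (h i) (h' i v) v
  exists_lipschitzWith_h' (i : ι) : ∃ K, LipschitzWith K (h' i)
  firmlyNonexpansive_T (i : ι) : FirmlyNonexpansive (T i)

namespace CompositeFixedPointProblem

variable {ι H : Type*} [NormedAddCommGroup H] [InnerProductSpace ℝ H] [CompleteSpace H]
  (P : CompositeFixedPointProblem ι H)

/-- The set `S` of common fixed points. -/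
def feasibleSet : Set H := ⋂ i, Function.fixedPoints (P.T i)

lemma convex_feasibleSet : Convex ℝ P.feasibleSet :=
  convex_iInter fun i ↦ (P.firmlyNonexpansive_T i).convex_fixedPoints

/-- The objective `ψ`. -/
def objective [Fintype ι] (v : H) : ℝ := ∑ i, (P.f i v + P.h i v)

variable {P}

lemma isFixedPt_of_mem_feasibleSet {p : H} (hp : p ∈ P.feasibleSet) (i : ι) :
    Function.IsFixedPt (P.T i) p :=
  Set.mem_iInter.1 hp i

end CompositeFixedPointProblem

/-- The inertial proximal splitting iteration with conjugate-gradient directions `d`. The entries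
`z 0` and `y 0` are unconstrained, and so is the initial direction `d 1`. -/
structure InertialSplitting {ι H : Type*} [Fintype ι] [NormedAddCommGroup H]
    [InnerProductSpace ℝ H] [CompleteSpace H] (P : CompositeFixedPointProblem ι H) where
  θ : ℕ → ℝ
  lam : ℕ → ℝ
  β : ℕ → ℝ
  α : ℕ → ℝ
  u : ι → H
  x : ℕ → H
  z : ℕ → H
  d : ℕ → ι → H
  y : ℕ → ι → H
  admissible : AdmissibleParameters θ lam β α
  z_eq (n : ℕ) (hn : 1 ≤ n) : z n = x n + θ n • (x n - x (n - 1))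
  d_succ (n : ℕ) (hn : 1 ≤ n) (i : ι) : d (n + 1) i = -P.h' i (z n) + β n • d n i
  isProx_y (n : ℕ) (hn : 1 ≤ n) (i : ι) :
    IsProx (P.f i) (lam n) (z n + lam n • d (n + 1) i) (y n i)
  x_succ (n : ℕ) (hn : 1 ≤ n) : x (n + 1) =
    (Fintype.card ι : ℝ)⁻¹ • ∑ i, (α n • u i + (1 - α n) • P.T i (y n i))
  bounded_y (i : ι) : (fun n ↦ y n i) =O[atTop] fun _ ↦ (1 : ℝ)

namespace InertialSplitting

variable {ι H : Type*} [Fintype ι] [NormedAddCommGroup H] [InnerProductSpace ℝ H]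
  [CompleteSpace H] {P : CompositeFixedPointProblem ι H} (A : InertialSplitting P)

lemma isSubgradientAt_y {n : ℕ} (hn : 1 ≤ n) (i : ι) :
    IsSubgradientAt (P.f i)
      ((A.lam n)⁻¹ • (A.z n - A.y n i) - P.h' i (A.z n) + A.β n • A.d n i) (A.y n i) := by
  have hsub := (A.isProx_y n hn i).isSubgradientAt (P.convexOn_f i)
  rwa [add_sub_right_comm, smul_add, inv_smul_smul₀ (A.admissible.lam_pos n).ne', A.d_succ n hn i,
    ← add_assoc, ← sub_eq_add_neg] at hsub

/-- The anchored points, whose average is the next iterate. -/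
def w (n : ℕ) (i : ι) : H := A.α n • A.u i + (1 - A.α n) • P.T i (A.y n i)

lemma x_succ_eq {n : ℕ} (hn : 1 ≤ n) :
    A.x (n + 1) = (Fintype.card ι : ℝ)⁻¹ • ∑ i, A.w n i :=
  A.x_succ n hn

lemma isBigO_T_y (i : ι) : (fun n ↦ P.T i (A.y n i)) =O[atTop] fun _ ↦ (1 : ℝ) :=
  isBigO_one_comp_of_lipschitzWith (P.firmlyNonexpansive_T i).lipschitzWith_one (A.bounded_y i)

lemma isBigO_x : A.x =O[atTop] fun _ ↦ (1 : ℝ) := by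
  have hα := A.admissible.α_isLittleO_one.isBigO
  have hw (i : ι) : (fun n ↦ A.w n i) =O[atTop] fun _ ↦ (1 : ℝ) := by
    simpa [w] using (hα.smul (isBigO_const_const (A.u i) one_ne_zero atTop)).add
      (((isBigO_refl (fun _ ↦ (1 : ℝ)) atTop).sub hα).smul (A.isBigO_T_y i))
  have havg := (IsBigO.sum (s := Finset.univ) fun i _ ↦ hw i).const_smul_left
    (Fintype.card ι : ℝ)⁻¹
  refine isBigO_one_succ_iff.1 (havg.congr' ?_ .rfl)
  filter_upwards [eventually_ge_atTop 1] with n hn using by simp [A.x_succ_eq hn]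

lemma isBigO_z_sub_x : (fun n ↦ A.z n - A.x n) =O[atTop] A.θ := by
  have hstep : (fun n ↦ A.x n - A.x (n - 1)) =O[atTop] fun _ ↦ (1 : ℝ) :=
    A.isBigO_x.sub (A.isBigO_x.comp_tendsto (tendsto_sub_atTop_nat 1))
  refine IsBigO.congr' ((isBigO_refl A.θ atTop).smul hstep) ?_ (by simp)
  filter_upwards [eventually_ge_atTop 1] with n hn using by simp [A.z_eq n hn]

lemma isLittleO_z_sub_x : (fun n ↦ A.z n - A.x n) =o[atTop] A.lam :=
  A.isBigO_z_sub_x.trans_isLittleO A.admissible.θ_isLittleO_lam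

lemma isBigO_z : A.z =O[atTop] fun _ ↦ (1 : ℝ) := by
  simpa using (A.isLittleO_z_sub_x.trans A.admissible.lam_isLittleO_one).isBigO.add A.isBigO_x

lemma isBigO_h'_z (i : ι) : (fun n ↦ P.h' i (A.z n)) =O[atTop] fun _ ↦ (1 : ℝ) :=
  let ⟨_, hK⟩ := P.exists_lipschitzWith_h' i
  isBigO_one_comp_of_lipschitzWith hK A.isBigO_z

lemma isBigO_d (i : ι) : (fun n ↦ A.d n i) =O[atTop] fun _ ↦ (1 : ℝ) :=
  isBigO_one_of_eq_add_smul A.admissible.tendsto_β (A.isBigO_h'_z i).neg_left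
    (eventually_atTop.2 ⟨1, fun n hn ↦ A.d_succ n hn i⟩)

lemma isBigO_β_smul_d (i : ι) : (fun n ↦ A.β n • A.d n i) =O[atTop] A.β := by
  simpa using (isBigO_refl A.β atTop).smul (A.isBigO_d i)

lemma eventually_norm_y_sub_le (i : ι) : ∀ᶠ n in atTop,
    (A.lam (n + 1))⁻¹ * ‖A.y (n + 1) i - A.y n i‖ ≤
      (A.lam (n + 1))⁻¹ * ‖A.z (n + 1) - A.z n‖
        + |(A.lam (n + 1))⁻¹ - (A.lam n)⁻¹| * ‖A.z n - A.y n i‖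
        + ‖A.β (n + 1) • A.d (n + 1) i - A.β n • A.d n i‖ := by
  obtain ⟨K, hK⟩ := P.exists_lipschitzWith_h' i
  have hlamK : Tendsto (fun n ↦ A.lam (n + 1) * K) atTop (𝓝 0) := by
    simpa using ((tendsto_add_atTop_iff_nat 1).2 A.admissible.tendsto_lam).mul_const (K : ℝ)
  filter_upwards [eventually_ge_atTop 1, hlamK.eventually_le_const two_pos] with n hn hle
  have hlam := A.admissible.lam_pos (n + 1)
  exact inv_mul_norm_prox_gradient_sub_le hlam (A.isSubgradientAt_y n.succ_pos i)
    (A.isSubgradientAt_y hn i)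
    (norm_forward_step_sub_le (P.convexOn_h i) (P.hasGradientAt_h i) hK hlam.le hle _ _)

lemma exists_isLittleO_norm_z_sub_le : ∃ ε : ℕ → ℝ, ε =o[atTop] (fun n ↦ A.α (n + 1)) ∧
    ∀ n, (A.lam (n + 1))⁻¹ * ‖A.z (n + 1) - A.z n‖ ≤
      (A.lam n)⁻¹ * ‖A.x (n + 1) - A.x n‖ + ε n := by
  have hstep : (fun n ↦ A.x (n + 1) - A.x n) =O[atTop] fun _ ↦ (1 : ℝ) :=
    (isBigO_one_succ_iff.2 A.isBigO_x).sub A.isBigO_x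
  have hinertia : (fun n ↦ (A.z (n + 1) - A.x (n + 1)) - (A.z n - A.x n))
      =o[atTop] fun n ↦ A.α (n + 1) * A.lam (n + 1) :=
    ((A.isBigO_z_sub_x.comp_tendsto (tendsto_add_atTop_nat 1)).trans_isLittleO
      A.admissible.θ_succ_isLittleO).sub
        (A.isBigO_z_sub_x.trans_isLittleO A.admissible.θ_isLittleO)
  refine ⟨fun n ↦ ((A.lam (n + 1))⁻¹ - (A.lam n)⁻¹) * ‖A.x (n + 1) - A.x n‖
      + (A.lam (n + 1))⁻¹ * ‖(A.z (n + 1) - A.x (n + 1)) - (A.z n - A.x n)‖, .add ?_ ?_,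
    fun n ↦ ?_⟩
  · simpa using A.admissible.inv_lam_sub.mul_isBigO hstep.norm_left
  · refine ((isBigO_refl _ atTop).mul_isLittleO hinertia.norm_left).congr_right fun n ↦ ?_
    field_simp [(A.admissible.lam_pos (n + 1)).ne']
  · have hlam := inv_nonneg.2 (A.admissible.lam_pos (n + 1)).le
    have hz : A.z (n + 1) - A.z n = (A.x (n + 1) - A.x n)
        + ((A.z (n + 1) - A.x (n + 1)) - (A.z n - A.x n)) := by abel
    have := mul_le_mul_of_nonneg_left (norm_add_le (A.x (n + 1) - A.x n)
      ((A.z (n + 1) - A.x (n + 1)) - (A.z n - A.x n))) hlam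
    rw [hz]
    linarith

lemma exists_isLittleO_norm_y_sub_le (i : ι) : ∃ ε : ℕ → ℝ,
    ε =o[atTop] (fun n ↦ A.α (n + 1)) ∧
      ∀ᶠ n in atTop, (A.lam (n + 1))⁻¹ * ‖A.y (n + 1) i - A.y n i‖ ≤
        (A.lam n)⁻¹ * ‖A.x (n + 1) - A.x n‖ + ε n := by
  obtain ⟨ε, hε, hz⟩ := A.exists_isLittleO_norm_z_sub_le
  have hmomentum : (fun n ↦ A.β (n + 1) • A.d (n + 1) i - A.β n • A.d n i)
      =o[atTop] fun n ↦ A.α (n + 1) :=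
    (((A.isBigO_β_smul_d i).comp_tendsto (tendsto_add_atTop_nat 1)).trans_isLittleO
      A.admissible.β_succ_isLittleO).sub
        ((A.isBigO_β_smul_d i).trans_isLittleO A.admissible.β_isLittleO)
  have hstepsize : (fun n ↦ |(A.lam (n + 1))⁻¹ - (A.lam n)⁻¹| * ‖A.z n - A.y n i‖)
      =o[atTop] fun n ↦ A.α (n + 1) := by
    simpa using A.admissible.inv_lam_sub.abs_left.mul_isBigO
      (A.isBigO_z.sub (A.bounded_y i)).norm_left
  refine ⟨_, (hε.add hstepsize).add hmomentum.norm_left, ?_⟩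
  filter_upwards [A.eventually_norm_y_sub_le i] with n hn
  linarith [hz n]

lemma exists_isLittleO_norm_w_sub_le (i : ι) : ∃ ε : ℕ → ℝ,
    ε =o[atTop] (fun n ↦ A.α (n + 1)) ∧
      ∀ᶠ n in atTop, (A.lam (n + 1))⁻¹ * ‖A.w (n + 1) i - A.w n i‖ ≤
        (1 - A.α (n + 1)) * ((A.lam n)⁻¹ * ‖A.x (n + 1) - A.x n‖) + ε n := by
  obtain ⟨ε, hε, hy⟩ := A.exists_isLittleO_norm_y_sub_le i
  have hdrift : (fun n ↦ (A.lam (n + 1))⁻¹ * ‖(A.α n - A.α (n + 1)) • (P.T i (A.y n i) - A.u i)‖)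
      =o[atTop] fun n ↦ A.α (n + 1) := by
    refine ((isBigO_refl _ atTop).mul_isLittleO (A.admissible.α_sub.smul_isBigO
      ((A.isBigO_T_y i).sub (isBigO_const_const (A.u i) one_ne_zero atTop))).norm_left).congr_right
        fun n ↦ ?_
    field_simp [(A.admissible.lam_pos (n + 1)).ne']
    rw [smul_eq_mul, mul_one]
  have hε' : (fun n ↦ (1 - A.α (n + 1)) * ε n) =o[atTop] fun n ↦ A.α (n + 1) := by
    simpa using ((isBigO_refl (fun _ ↦ (1 : ℝ)) atTop).sub
      A.admissible.α_succ_isLittleO_one.isBigO).mul_isLittleO hε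
  refine ⟨_, hdrift.add hε', ?_⟩
  filter_upwards [hy, (tendsto_add_atTop_nat 1).eventually A.admissible.eventually_α_le_one]
    with n hn hα
  have hlam := inv_nonneg.2 (A.admissible.lam_pos (n + 1)).le
  have hα' : 0 ≤ 1 - A.α (n + 1) := sub_nonneg.2 hα
  have hT : ‖P.T i (A.y (n + 1) i) - P.T i (A.y n i)‖ ≤ ‖A.y (n + 1) i - A.y n i‖ := by
    simpa using (P.firmlyNonexpansive_T i).lipschitzWith_one.norm_sub_le _ _
  have hw : A.w (n + 1) i - A.w n i = (A.α n - A.α (n + 1)) • (P.T i (A.y n i) - A.u i)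
      + (1 - A.α (n + 1)) • (P.T i (A.y (n + 1) i) - P.T i (A.y n i)) := by
    simp only [w]
    module
  calc (A.lam (n + 1))⁻¹ * ‖A.w (n + 1) i - A.w n i‖
      ≤ (A.lam (n + 1))⁻¹ * (‖(A.α n - A.α (n + 1)) • (P.T i (A.y n i) - A.u i)‖
          + (1 - A.α (n + 1)) * ‖A.y (n + 1) i - A.y n i‖) := by
        rw [hw]
        gcongr
        refine (norm_add_le _ _).trans ?_
        rw [norm_smul (1 - A.α (n + 1)), Real.norm_of_nonneg hα']
        gcongr
    _ ≤ _ := by linarith [mul_le_mul_of_nonneg_left hn hα']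

lemma exists_isLittleO_norm_x_sub_le [Nonempty ι] : ∃ ε : ℕ → ℝ,
    ε =o[atTop] (fun n ↦ A.α (n + 1)) ∧
      ∀ᶠ n in atTop, (A.lam (n + 1))⁻¹ * ‖A.x (n + 1 + 1) - A.x (n + 1)‖ ≤
        (1 - A.α (n + 1)) * ((A.lam n)⁻¹ * ‖A.x (n + 1) - A.x n‖) + ε n := by
  choose ε hε hw using A.exists_isLittleO_norm_w_sub_le
  refine ⟨fun n ↦ (Fintype.card ι : ℝ)⁻¹ * ∑ i, ε i n,
    (IsLittleO.fun_sum fun i _ ↦ hε i).const_mul_left _, ?_⟩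
  filter_upwards [eventually_ge_atTop 1, eventually_all.2 hw] with n hn hwn
  have hdiff : A.x (n + 1 + 1) - A.x (n + 1)
      = (Fintype.card ι : ℝ)⁻¹ • ∑ i, (A.w (n + 1) i - A.w n i) := by
    rw [A.x_succ_eq n.succ_pos, A.x_succ_eq hn, ← smul_sub, Finset.sum_sub_distrib]
  calc (A.lam (n + 1))⁻¹ * ‖A.x (n + 1 + 1) - A.x (n + 1)‖
      ≤ (A.lam (n + 1))⁻¹ * ((Fintype.card ι : ℝ)⁻¹ * ∑ i, ‖A.w (n + 1) i - A.w n i‖) := by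
        rw [hdiff]
        exact mul_le_mul_of_nonneg_left (convexOn_map_average_le convexOn_univ_norm _)
          (inv_nonneg.2 (A.admissible.lam_pos (n + 1)).le)
    _ = (Fintype.card ι : ℝ)⁻¹ * ∑ i, (A.lam (n + 1))⁻¹ * ‖A.w (n + 1) i - A.w n i‖ := by
        rw [Finset.mul_sum, Finset.mul_sum, Finset.mul_sum]
        exact Finset.sum_congr rfl fun i _ ↦ mul_left_comm _ _ _
    _ ≤ (Fintype.card ι : ℝ)⁻¹ * ∑ i,
          ((1 - A.α (n + 1)) * ((A.lam n)⁻¹ * ‖A.x (n + 1) - A.x n‖) + ε i n) := by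
        gcongr with i
        exact hwn i
    _ = _ := by
        rw [Finset.sum_add_distrib, Finset.sum_const, Finset.card_univ, nsmul_eq_mul, mul_add,
          inv_mul_cancel_left₀ (Nat.cast_ne_zero.2 Fintype.card_ne_zero)]

lemma tendsto_inv_lam_mul_norm_x_sub [Nonempty ι] :
    Tendsto (fun n ↦ (A.lam n)⁻¹ * ‖A.x (n + 1) - A.x n‖) atTop (𝓝 0) := by
  obtain ⟨ε, hε, hrec⟩ := A.exists_isLittleO_norm_x_sub_le
  exact tendsto_zero_of_le_one_sub_mul_add
    (fun n ↦ mul_nonneg (inv_nonneg.2 (A.admissible.lam_pos n).le) (norm_nonneg _))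
    (fun n ↦ (A.admissible.α_pos (n + 1)).le)
    ((tendsto_add_atTop_nat 1).eventually A.admissible.eventually_α_le_one)
    ((summable_nat_add_iff 1).not.2 A.admissible.not_summable_α) hε hrec

lemma isLittleO_z_sub_x_succ [Nonempty ι] : (fun n ↦ A.z n - A.x (n + 1)) =o[atTop] A.lam := by
  have hstep : (fun n ↦ A.x (n + 1) - A.x n) =o[atTop] A.lam := by
    refine isLittleO_norm_left.1 (isLittleO_of_tendsto
      (fun n h ↦ absurd h (A.admissible.lam_pos n).ne') ?_)
    simpa only [div_eq_inv_mul] using A.tendsto_inv_lam_mul_norm_x_sub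
  simpa using A.isLittleO_z_sub_x.sub hstep

/-- The sum of the squared residuals of the proximal and fixed-point steps. -/
def residual (n : ℕ) : ℝ :=
  ∑ i, (‖A.z n - A.y n i‖ ^ 2 + ‖P.T i (A.y n i) - A.y n i‖ ^ 2)

lemma residual_nonneg (n : ℕ) : 0 ≤ A.residual n :=
  Finset.sum_nonneg fun _ _ ↦ by positivity

lemma norm_sq_add_norm_sq_le_residual (n : ℕ) (i : ι) :
    ‖A.z n - A.y n i‖ ^ 2 + ‖P.T i (A.y n i) - A.y n i‖ ^ 2 ≤ A.residual n :=
  Finset.single_le_sum (f := fun i ↦ ‖A.z n - A.y n i‖ ^ 2 + ‖P.T i (A.y n i) - A.y n i‖ ^ 2)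
    (fun _ _ ↦ by positivity) (Finset.mem_univ i)

/-- The error made in the descent inequality towards `p` when the value of `f i + h i` at the
iterates is replaced by its value at `c`, using the subgradient `g` of `f i` at `c`. -/
def modelError (g c p : H) (i : ι) (n : ℕ) : ℝ :=
  ⟪P.h' i (A.z n), A.z n - A.y n i⟫ + ⟪A.y n i - p, A.β n • A.d n i⟫
    - ⟪g, A.y n i - c⟫ - ⟪P.h' i c, A.z n - c⟫

/-- The part of the descent inequality towards `p` that comes from moving the base point from
`z n` to `x (n + 1)` and from anchoring. -/
def descentRemainder (p : H) (n : ℕ) : ℝ :=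
  Fintype.card ι * (‖A.z n - p‖ ^ 2 - ‖A.x (n + 1) - p‖ ^ 2) + A.α n * ∑ i, ‖A.u i - p‖ ^ 2

lemma norm_w_sub_sq_le {n : ℕ} (hα : A.α n ≤ 1) (i : ι) (p : H) :
    ‖A.w n i - p‖ ^ 2 ≤ A.α n * ‖A.u i - p‖ ^ 2 + ‖P.T i (A.y n i) - p‖ ^ 2 := by
  have hα0 := (A.admissible.α_pos n).le
  have := (convexOn_norm_sub_sq p).2 (Set.mem_univ (A.u i)) (Set.mem_univ (P.T i (A.y n i))) hα0
    (sub_nonneg.2 hα) (add_sub_cancel _ _)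
  rw [w]
  refine this.trans ?_
  rw [smul_eq_mul, smul_eq_mul]
  linarith [mul_nonneg hα0 (sq_nonneg ‖P.T i (A.y n i) - p‖)]

lemma norm_sq_add_norm_sq_le_of_isSubgradientAt {n : ℕ} (hn : 1 ≤ n) (hα : A.α n ≤ 1) {i : ι}
    {c p g : H} (hp : Function.IsFixedPt (P.T i) p) (hg : IsSubgradientAt (P.f i) g c) :
    ‖A.z n - A.y n i‖ ^ 2 + ‖P.T i (A.y n i) - A.y n i‖ ^ 2 ≤
      2 * A.lam n * (P.f i p + P.h i p - (P.f i c + P.h i c) + A.modelError g c p i n)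
        + (‖A.z n - p‖ ^ 2 - ‖A.w n i - p‖ ^ 2 + A.α n * ‖A.u i - p‖ ^ 2) := by
  have hlam := A.admissible.lam_pos n
  have hstep := norm_sub_sq_le_of_prox_gradient_step hlam (A.isSubgradientAt_y hn i)
    (isSubgradientAt_of_hasGradientAt (P.convexOn_h i) (P.hasGradientAt_h i (A.z n))) p
  have hfix := (P.firmlyNonexpansive_T i).norm_sub_sq_le hp (A.y n i)
  have hf := mul_le_mul_of_nonneg_left (hg (A.y n i)) hlam.le
  have hh := mul_le_mul_of_nonneg_left
    (isSubgradientAt_of_hasGradientAt (P.convexOn_h i) (P.hasGradientAt_h i c) (A.z n)) hlam.le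
  rw [real_inner_comm (A.y n i - p)] at hstep
  rw [modelError]
  linear_combination hstep + hfix + A.norm_w_sub_sq_le hα i p + 2 * hf + 2 * hh

lemma residual_le [Nonempty ι] {n : ℕ} (hn : 1 ≤ n) (hα : A.α n ≤ 1) {c p : H} {g : ι → H}
    (hp : p ∈ P.feasibleSet) (hg : ∀ i, IsSubgradientAt (P.f i) (g i) c) :
    A.residual n ≤
      2 * A.lam n * (P.objective p - P.objective c + ∑ i, A.modelError (g i) c p i n)
        + A.descentRemainder p n := by
  have havg : Fintype.card ι * ‖A.x (n + 1) - p‖ ^ 2 ≤ ∑ i, ‖A.w n i - p‖ ^ 2 := by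
    rw [A.x_succ_eq hn, ← le_inv_mul_iff₀ (Nat.cast_pos.2 Fintype.card_pos)]
    exact convexOn_map_average_le (convexOn_norm_sub_sq p) _
  have hsum := Finset.sum_le_sum fun i (_ : i ∈ Finset.univ) ↦
    A.norm_sq_add_norm_sq_le_of_isSubgradientAt hn hα (P.isFixedPt_of_mem_feasibleSet hp i) (hg i)
  rw [Finset.sum_add_distrib (f := fun i ↦ 2 * A.lam n * _), ← Finset.mul_sum] at hsum
  simp only [Finset.sum_add_distrib, Finset.sum_sub_distrib, ← Finset.mul_sum, Finset.sum_const,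
    Finset.card_univ, nsmul_eq_mul] at hsum
  simp only [residual, descentRemainder, CompositeFixedPointProblem.objective,
    Finset.sum_add_distrib]
  linarith

lemma isLittleO_descentRemainder [Nonempty ι] (p : H) : A.descentRemainder p =o[atTop] A.lam := by
  have hp := isBigO_const_const (l := (atTop : Filter ℕ)) p (one_ne_zero (α := ℝ))
  have hmove : (fun n ↦ ‖A.z n - p‖ ^ 2 - ‖A.x (n + 1) - p‖ ^ 2) =o[atTop] A.lam := by
    refine (isLittleO_inner ((A.isBigO_z.sub hp).add ((isBigO_one_succ_iff.2 A.isBigO_x).sub hp))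
      A.isLittleO_z_sub_x_succ).congr_left fun n ↦ ?_
    rw [← sub_sub_sub_cancel_right (A.z n) (A.x (n + 1)) p, inner_add_sub_eq_norm_sq_sub_norm_sq]
  refine (hmove.const_mul_left _).add ?_
  simpa only [mul_comm] using A.admissible.α_isLittleO_lam.const_mul_left (∑ i, ‖A.u i - p‖ ^ 2)

lemma isBigO_modelError (g c p : H) (i : ι) :
    A.modelError g c p i =O[atTop] fun _ ↦ (1 : ℝ) := by
  have hconst (v : H) := isBigO_const_const (l := (atTop : Filter ℕ)) v (one_ne_zero (α := ℝ))
  have hβd : (fun n ↦ A.β n • A.d n i) =O[atTop] fun _ ↦ (1 : ℝ) :=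
    (A.isBigO_β_smul_d i).trans (A.admissible.tendsto_β.isBigO_one ℝ)
  exact (((isBigO_inner (A.isBigO_h'_z i) (A.isBigO_z.sub (A.bounded_y i))).add
    (isBigO_inner ((A.bounded_y i).sub (hconst p)) hβd)).sub
      (isBigO_inner (hconst g) ((A.bounded_y i).sub (hconst c)))).sub
        (isBigO_inner (hconst (P.h' i c)) (A.isBigO_z.sub (hconst c)))

lemma tendsto_residual [Nonempty ι] (hS : P.feasibleSet.Nonempty) :
    Tendsto A.residual atTop (𝓝 0) := by
  obtain ⟨p, hp⟩ := hS
  choose g hg using fun i ↦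
    exists_isSubgradientAt_of_continuous (P.convexOn_f i) (P.continuous_f i) p
  have hmodel : (fun n ↦ 2 * A.lam n * ∑ i, A.modelError (g i) p p i n)
      =o[atTop] fun _ ↦ (1 : ℝ) := by
    simpa using (A.admissible.lam_isLittleO_one.const_mul_left 2).mul_isBigO
      (IsBigO.fun_sum fun i _ ↦ A.isBigO_modelError (g i) p p i)
  have hbound := (isLittleO_one_iff ℝ).1
    (hmodel.add ((A.isLittleO_descentRemainder p).trans A.admissible.lam_isLittleO_one))
  refine squeeze_zero' (.of_forall A.residual_nonneg) ?_ hbound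
  filter_upwards [eventually_ge_atTop 1, A.admissible.eventually_α_le_one] with n hn hα
  simpa using A.residual_le hn hα hp hg

lemma tendsto_z_sub_y [Nonempty ι] (hS : P.feasibleSet.Nonempty) (i : ι) :
    Tendsto (fun n ↦ A.z n - A.y n i) atTop (𝓝 0) := by
  refine tendsto_zero_of_norm_sq_le (fun n ↦ ?_) (A.tendsto_residual hS)
  exact (le_add_of_nonneg_right (sq_nonneg _)).trans
    (A.norm_sq_add_norm_sq_le_residual n i)

lemma tendsto_T_y_sub_y [Nonempty ι] (hS : P.feasibleSet.Nonempty) (i : ι) :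
    Tendsto (fun n ↦ P.T i (A.y n i) - A.y n i) atTop (𝓝 0) := by
  refine tendsto_zero_of_norm_sq_le (fun n ↦ ?_) (A.tendsto_residual hS)
  exact (le_add_of_nonneg_left (sq_nonneg _)).trans
    (A.norm_sq_add_norm_sq_le_residual n i)

section WeakClusterPoints

variable {l : Filter ℕ} {c : H} (hl : l ≤ atTop) (hx : WeakTendsto A.x l c)
include hl hx

lemma weakTendsto_z : WeakTendsto A.z l c :=
  hx.congr_of_tendsto_sub (((isLittleO_one_iff ℝ).1
    (A.isLittleO_z_sub_x.trans A.admissible.lam_isLittleO_one)).mono_left hl)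

variable [Nonempty ι] (hS : P.feasibleSet.Nonempty)
include hS

lemma weakTendsto_y (i : ι) : WeakTendsto (fun n ↦ A.y n i) l c := by
  refine (A.weakTendsto_z hl hx).congr_of_tendsto_sub ?_
  simpa only [neg_sub, neg_zero] using ((A.tendsto_z_sub_y hS i).mono_left hl).neg

lemma mem_feasibleSet_of_weakTendsto [l.NeBot] : c ∈ P.feasibleSet :=
  Set.mem_iInter.2 fun i ↦ (P.firmlyNonexpansive_T i).isFixedPt_of_weakTendsto
    (A.weakTendsto_y hl hx hS i) ((A.bounded_y i).mono hl)
    ((A.tendsto_T_y_sub_y hS i).mono_left hl)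

lemma tendsto_modelError (g p : H) (i : ι) : Tendsto (A.modelError g c p i) l (𝓝 0) := by
  have hforward : Tendsto (fun n ↦ ⟪P.h' i (A.z n), A.z n - A.y n i⟫) atTop (𝓝 0) :=
    (isLittleO_one_iff ℝ).1 (isLittleO_inner (A.isBigO_h'_z i)
      ((isLittleO_one_iff ℝ).2 (A.tendsto_z_sub_y hS i)))
  have hmomentum : Tendsto (fun n ↦ ⟪A.y n i - p, A.β n • A.d n i⟫) atTop (𝓝 0) :=
    (isLittleO_one_iff ℝ).1 (isLittleO_inner
      ((A.bounded_y i).sub (isBigO_const_const p one_ne_zero atTop))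
      ((A.isBigO_β_smul_d i).trans_isLittleO ((isLittleO_one_iff ℝ).2 A.admissible.tendsto_β)))
  have hlim := (((hforward.add hmomentum).mono_left hl).sub
    ((A.weakTendsto_y hl hx hS i).tendsto_inner_sub g)).sub
      ((A.weakTendsto_z hl hx).tendsto_inner_sub (P.h' i c))
  rwa [add_zero, sub_zero, sub_zero] at hlim

lemma isMinOn_of_weakTendsto [l.NeBot] : IsMinOn P.objective P.feasibleSet c := by
  intro p hp
  choose g hg using fun i ↦
    exists_isSubgradientAt_of_continuous (P.convexOn_f i) (P.continuous_f i) c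
  have hmodel : Tendsto (fun n ↦ ∑ i, A.modelError (g i) c p i n) l (𝓝 0) := by
    simpa using tendsto_finsetSum Finset.univ fun i _ ↦ A.tendsto_modelError hl hx hS (g i) p i
  have hremainder : Tendsto (fun n ↦ A.descentRemainder p n / A.lam n) l (𝓝 0) :=
    (A.isLittleO_descentRemainder p).tendsto_div_nhds_zero.mono_left hl
  have hlim : Tendsto (fun n ↦ P.objective p - P.objective c
      + ∑ i, A.modelError (g i) c p i n + A.descentRemainder p n / A.lam n / 2) l
      (𝓝 (P.objective p - P.objective c)) := by
    simpa using (hmodel.const_add _).add (hremainder.div_const 2)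
  refine sub_nonneg.1 (ge_of_tendsto hlim (hl ?_))
  filter_upwards [eventually_ge_atTop 1, A.admissible.eventually_α_le_one] with n hn hα
  have hlam := A.admissible.lam_pos n
  have hdescent := (A.residual_nonneg n).trans (A.residual_le hn hα hp hg)
  refine nonneg_of_mul_nonneg_right (a := 2 * A.lam n) ?_ (mul_pos two_pos hlam)
  convert hdescent using 1
  field_simp

end WeakClusterPoints

end InertialSplitting

theorem alg2_weak_convergence_strict_convex_general {ι H : Type*} [Fintype ι] [Nonempty ι]
    [NormedAddCommGroup H] [InnerProductSpace ℝ H] [CompleteSpace H]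
    {P : CompositeFixedPointProblem ι H} (A : InertialSplitting P)
    (hS : P.feasibleSet.Nonempty) (hψ : StrictConvexOn ℝ P.feasibleSet P.objective) :
    ∃ p ∈ P.feasibleSet, IsMinOn P.objective P.feasibleSet p ∧ WeakTendsto A.x atTop p := by
  have hcluster (U : Ultrafilter ℕ) (hU : (U : Filter ℕ) ≤ atTop) : ∃ c ∈ P.feasibleSet,
      IsMinOn P.objective P.feasibleSet c ∧ WeakTendsto A.x U c := by
    obtain ⟨c, hc⟩ := exists_weakTendsto_ultrafilter (A.isBigO_x.mono hU)
    exact ⟨c, A.mem_feasibleSet_of_weakTendsto hU hc hS, A.isMinOn_of_weakTendsto hU hc hS, hc⟩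
  obtain ⟨p, hpS, hp, -⟩ := hcluster (hyperfilter ℕ) Nat.hyperfilter_le_atTop
  refine ⟨p, hpS, hp, fun q ↦ tendsto_iff_ultrafilter _ _ _ |>.2 fun U hU ↦ ?_⟩
  obtain ⟨c, hcS, hc, hxc⟩ := hcluster U hU
  exact hψ.eq_of_isMinOn hp hc hpS hcS ▸ hxc q

end InertialSplittingMethod

theorem alg2_weak_convergence_strict_convex
    {H : Type*} [NormedAddCommGroup H] [InnerProductSpace ℝ H] [CompleteSpace H]
    (M : ℕ) (hM : 1 ≤ M)
    (f h : ℕ → H → ℝ) (h' : ℕ → H → H) (L : ℕ → ℝ) (T : ℕ → H → H)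
    (hf_cont : ∀ i ∈ Finset.Icc 1 M, Continuous (f i))
    (hf_conv : ∀ i ∈ Finset.Icc 1 M, ConvexOn ℝ Set.univ (f i))
    (hh_conv : ∀ i ∈ Finset.Icc 1 M, ConvexOn ℝ Set.univ (h i))
    (hh_grad : ∀ i ∈ Finset.Icc 1 M, ∀ x : H, HasGradientAt (h i) (h' i x) x)
    (hL_pos : ∀ i ∈ Finset.Icc 1 M, 0 < L i)
    (hh_lip : ∀ i ∈ Finset.Icc 1 M, ∀ x y : H, ‖h' i x - h' i y‖ ≤ (1 / L i) * ‖x - y‖)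
    (hT_firm : ∀ i ∈ Finset.Icc 1 M, ∀ x y : H,
      ‖T i x - T i y‖ ^ 2 ≤ @inner ℝ H _ (T i x - T i y) (x - y))
    (S : Set H) (hS : S = ⋂ i ∈ Finset.Icc 1 M, {x : H | T i x = x}) (hS_ne : S.Nonempty)
    (θ lam β α : ℕ → ℝ) (σ : ℝ) (hσ : 1 ≤ σ)
    (hθ_range : ∀ n, 0 ≤ θ n ∧ θ n < 1)
    (hlam_pos : ∀ n, 0 < lam n)
    (hlam_le : ∀ n, ∀ i ∈ Finset.Icc 1 M, lam n ≤ 2 * L i)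
    (hβ_range : ∀ n, 0 < β n ∧ β n ≤ 1)
    (hα_range : ∀ n, 0 < α n ∧ α n ≤ 1)
    (hθ_anti : Antitone θ) (hlam_anti : Antitone lam)
    (hβ_anti : Antitone β) (hα_anti : Antitone α)
    (hθ_lim : Tendsto θ atTop (𝓝 0)) (hlam_lim : Tendsto lam atTop (𝓝 0))
    (hβ_lim : Tendsto β atTop (𝓝 0)) (hα_lim : Tendsto α atTop (𝓝 0))
    (hC1 : ¬ Summable α)
    (hC2 : Tendsto (fun n => (1 / α (n+1)) * |1 / lam (n+1) - 1 / lam n|) atTop (𝓝 0))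
    (hC3 : Tendsto (fun n => (1 / lam (n+1)) * |1 - α n / α (n+1)|) atTop (𝓝 0))
    (hC4 : Tendsto (fun n => α n / lam n) atTop (𝓝 0))
    (hC5 : Tendsto (fun n => θ n / (α (n+1) * lam (n+1))) atTop (𝓝 0))
    (hC6 : ∀ n, lam n / lam (n+1) ≤ σ)
    (hC7 : Tendsto (fun n => β n / α (n+1)) atTop (𝓝 0))
    (x z : ℕ → H) (w y d : ℕ → ℕ → H) (u : ℕ → H)
    (hd1 : ∀ i ∈ Finset.Icc 1 M, d 1 i = -(h' i (z 0)))
    (hz : ∀ n ≥ 1, z n = x n + θ n • (x n - x (n-1)))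
    (hd : ∀ n ≥ 1, ∀ i ∈ Finset.Icc 1 M, d (n+1) i = -(h' i (z n)) + β n • d n i)
    (hy : ∀ n ≥ 1, ∀ i ∈ Finset.Icc 1 M, ∀ v : H,
      f i (y n i) + (1 / (2 * lam n)) * ‖z n + lam n • d (n+1) i - y n i‖ ^ 2
        ≤ f i v + (1 / (2 * lam n)) * ‖z n + lam n • d (n+1) i - v‖ ^ 2)
    (hw : ∀ n ≥ 1, ∀ i ∈ Finset.Icc 1 M,
      w n (i+1) = α n • u i + (1 - α n) • T i (y n i))
    (hx : ∀ n ≥ 1, x (n+1) = (M : ℝ)⁻¹ • ∑ i ∈ Finset.Icc 1 M, w n (i+1))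
    (hy_bdd : ∀ i ∈ Finset.Icc 1 M, ∃ C, ∀ n ≥ 1, ‖y n i‖ ≤ C)
    (ψ : H → ℝ) (hψ : ∀ v : H, ψ v = ∑ i ∈ Finset.Icc 1 M, (f i v + h i v))
    (hΩ_ne : ∃ p ∈ S, ∀ v ∈ S, ψ p ≤ ψ v)
    (hψ_strict : StrictConvexOn ℝ Set.univ ψ)
    : ∃ p : H, (p ∈ S ∧ ∀ v ∈ S, ψ p ≤ ψ v) ∧
      ∀ q : H, Tendsto (fun n => @inner ℝ H _ (x n) q) atTop (𝓝 (@inner ℝ H _ p q)) := by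
  have : Nonempty (Finset.Icc 1 M) := ⟨1, Finset.left_mem_Icc.2 hM⟩
  let P : CompositeFixedPointProblem (Finset.Icc 1 M) H :=
    { f i := f i, h i := h i, h' i := h' i, T i := T i
      continuous_f i := hf_cont i i.2
      convexOn_f i := hf_conv i i.2
      convexOn_h i := hh_conv i i.2
      hasGradientAt_h i := hh_grad i i.2
      exists_lipschitzWith_h' i :=
        ⟨_, .of_dist_le' (by simpa only [dist_eq_norm] using hh_lip i i.2)⟩
      firmlyNonexpansive_T i := hT_firm i i.2 }
  let A : InertialSplitting P :=
    { θ, lam, β, α, x, z, u i := u i, d n i := d n i, y n i := y n i, z_eq := hz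
      admissible := .of_tendsto hlam_pos (fun n ↦ (hα_range n).1) hlam_lim hC1 hC2 hC3 hC4 hC5 hC7
      d_succ n hn i := hd n hn i i.2
      isProx_y n hn i := hy n hn i i.2
      x_succ n hn := by
        rw [hx n hn, Finset.sum_congr rfl (hw n hn), Fintype.card_coe, Nat.card_Icc,
          Nat.add_sub_cancel, ← Finset.sum_coe_sort]
      bounded_y i := let ⟨C, hC⟩ := hy_bdd i i.2
        .of_bound C (eventually_atTop.2 ⟨1, fun n hn ↦ by simpa using hC n hn⟩) }
  have hPS : P.feasibleSet = S := hS ▸ Set.iInter_subtype _ _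
  have hPψ : P.objective = ψ := funext fun v ↦ (Finset.sum_coe_sort _ _).trans (hψ v).symm
  obtain ⟨p, hpS, hp, hxp⟩ := alg2_weak_convergence_strict_convex_general A (hPS ▸ hS_ne)
    (hPψ ▸ hψ_strict.subset (Set.subset_univ _) P.convex_feasibleSet)
  exact ⟨p, ⟨hPS ▸ hpS, fun v hv ↦ hPψ ▸ hp (hPS ▸ hv)⟩, hxp⟩
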